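/- Let d = (d_1, …, d_n) be a graphical degree sequence with d_min ≥ 1 and 3 ≤ d_max ≤ (1/3)·√M, and let Z ∈ Ω(d). Then |L*(Z)| ≤ 2·M^6·|Ω(d)|, where L*(Z) is the set of good encodings consistent with Z. -/

import Mathlib

/-! Raising and lowering labels by one in turn along a closed walk of even length keeps the row
sums of an encoding. A suitable walk of length six through a `(-1)`-defect edge removes that
defect, one of length four through a `2`-defect edge removes the latter, and neither creates new
defects. Let `C (p, q)` be the set of encodings with `p` edges labelled `2` and `q` labelled `-1`.
Double counting the walks gives `2 |C (p, q + 1)| ≤ M² |C (p, q)|`, since by consistency a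
`(-1)`-defect is an edge of `Z` and so can be recovered in `M` ways, and
`2 |C (p + 1, 0)| ≤ M |C (p, 0)|`. The matrices in `C (0, 0)` are adjacency matrices of graphs in
`Ω (d)`, so that `|C (p, q)|` is at most `M ^ (p + 2 q) |Ω (d)| / 2 ^ (p + q)`. Among the classes
which occur in `L*(Z)`, the exponent exceeds six only for `p = 1` and `q = 3`. In that case the
five configurations force the `2`-defect edge to be adjacent to a `(-1)`-defect edge, and one walk
of length six removes both at once, at the cost of a factor `M²` instead of `M³`. -/

open scoped Classical

noncomputable section

namespace SwitchChain

variable {n : ℕ}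

/-- `Omega d` is the set of simple graphs on `[n] = Fin n` with degree sequence `d`. -/
def Omega (d : Fin n → ℕ) : Set (SimpleGraph (Fin n)) :=
  {G | ∀ v, {w | G.Adj v w}.ncard = d v}

/-- `M d` is the sum of the degrees. -/
def M (d : Fin n → ℕ) : ℕ := ∑ j, d j

/-- The maximum degree. -/
def dmax (d : Fin n → ℕ) : ℕ := Finset.univ.sup d

/-- An encoding for the degree sequence `d`: a symmetric integer matrix with zero
diagonal, entries in `{-1, 0, 1, 2}`, and row sums `d`. -/
def IsEncoding (d : Fin n → ℕ) (L : Matrix (Fin n) (Fin n) ℤ) : Prop :=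
  (∀ i j, L i j = L j i) ∧ (∀ i, L i i = 0) ∧
  (∀ i j, L i j = -1 ∨ L i j = 0 ∨ L i j = 1 ∨ L i j = 2) ∧
  (∀ i, ∑ j, L i j = (d i : ℤ))

/-- The set of (unordered) edges of `L` carrying the label `c`. -/
def labelEdges (L : Matrix (Fin n) (Fin n) ℤ) (c : ℤ) : Set (Sym2 (Fin n)) :=
  {e | ∃ x y : Fin n, e = s(x, y) ∧ x ≠ y ∧ L x y = c}

/-- Every defect edge of `L` occurs, with its label, in the labelled edge set `D`. -/
def DefectsWithin (L : Matrix (Fin n) (Fin n) ℤ) (D : Set (Sym2 (Fin n) × ℤ)) : Prop :=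
  ∀ x y : Fin n, x ≠ y → (L x y = 2 ∨ L x y = -1) → (s(x, y), L x y) ∈ D

/-- A valid encoding: at most four defect edges, forming a labelled subgraph of one
of the five possible configurations. -/
def ValidEncoding (d : Fin n → ℕ) (L : Matrix (Fin n) (Fin n) ℤ) : Prop :=
  IsEncoding d L ∧
  (labelEdges L 2).ncard + (labelEdges L (-1)).ncard ≤ 4 ∧
  ∃ (a b c u e f : Fin n) (ℓ : ℤ), (ℓ = -1 ∨ ℓ = 2) ∧
    (([a, b, c, u].Pairwise (· ≠ ·) ∧ e ≠ f ∧
        e ∉ ({a, b, c, u} : Set (Fin n)) ∧ f ∉ ({a, b, c, u} : Set (Fin n)) ∧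
        DefectsWithin L {(s(a, b), 2), (s(b, c), -1), (s(b, u), -1), (s(e, f), ℓ)}) ∨
     ([a, b, c, u, e].Pairwise (· ≠ ·) ∧
        DefectsWithin L {(s(a, b), 2), (s(b, c), -1), (s(b, u), -1), (s(u, e), ℓ)}) ∨
     ([a, b, c, u, e].Pairwise (· ≠ ·) ∧
        DefectsWithin L {(s(a, b), -1), (s(b, c), -1), (s(b, u), 2), (s(u, e), ℓ)}) ∨
     ([a, b, c, u].Pairwise (· ≠ ·) ∧
        DefectsWithin L {(s(a, b), -1), (s(b, c), -1), (s(b, u), 2), (s(u, c), ℓ)}) ∨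
     ([a, b, c, u].Pairwise (· ≠ ·) ∧
        DefectsWithin L {(s(a, b), 2), (s(b, c), -1), (s(b, u), -1), (s(u, c), ℓ)}))

/-- A good encoding: a valid encoding satisfying the degree conditions of
Lemma 2.3. -/
def GoodEncoding (d : Fin n → ℕ) (L : Matrix (Fin n) (Fin n) ℤ) : Prop :=
  ValidEncoding d L ∧
  (∀ x y : Fin n, x ≠ y → L x y = 2 → 2 ≤ d x ∧ 2 ≤ d y) ∧
  (∀ x y z : Fin n, x ≠ y → y ≠ z → x ≠ z → L x y = 2 → L y z = 2 → 4 ≤ d y) ∧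
  (∀ x y z : Fin n, x ≠ y → y ≠ z → x ≠ z → L x y = 2 → L y z = -1 → 3 ≤ d y)

/-- The 0-1 adjacency matrix of a simple graph, over `ℤ`. -/
def adjMat (Z : SimpleGraph (Fin n)) : Matrix (Fin n) (Fin n) ℤ :=
  fun i j => if Z.Adj i j then 1 else 0

/-- `L` is consistent with `Z` if every entry of `L + Z` lies in `{0, 1, 2}`. -/
def ConsistentWith (L : Matrix (Fin n) (Fin n) ℤ) (Z : SimpleGraph (Fin n)) : Prop :=
  ∀ i j, L i j + adjMat Z i j = 0 ∨ L i j + adjMat Z i j = 1 ∨ L i j + adjMat Z i j = 2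

/-- `L*(Z)`: the set of good encodings consistent with `Z`. -/
def Lstar (d : Fin n → ℕ) (Z : SimpleGraph (Fin n)) : Set (Matrix (Fin n) (Fin n) ℤ) :=
  {L | GoodEncoding d L ∧ ConsistentWith L Z}

section LabelCounts

variable {d : Fin n → ℕ} {L : Matrix (Fin n) (Fin n) ℤ} {c : ℤ} {D : ℕ}

/-- The ordered pairs carrying the label `c`; each edge labelled `c` gives two of them. -/
def labelPairs (L : Matrix (Fin n) (Fin n) ℤ) (c : ℤ) : Finset (Fin n × Fin n) :=
  Finset.univ.filter fun e => L e.1 e.2 = c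

/-- The neighbours of `i` along edges labelled `c`. -/
def labelNbrs (L : Matrix (Fin n) (Fin n) ℤ) (c : ℤ) (i : Fin n) : Finset (Fin n) :=
  Finset.univ.filter fun j => L i j = c

/-- The simple graph formed by the edges labelled `c`. -/
def labelGraph (L : Matrix (Fin n) (Fin n) ℤ) (c : ℤ) : SimpleGraph (Fin n) :=
  SimpleGraph.fromRel fun i j => L i j = c

@[simp]
lemma mem_labelPairs {e : Fin n × Fin n} : e ∈ labelPairs L c ↔ L e.1 e.2 = c := by
  simp [labelPairs]

@[simp]
lemma mem_labelNbrs {i j : Fin n} : j ∈ labelNbrs L c i ↔ L i j = c := by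
  simp [labelNbrs]

lemma card_labelPairs_eq_sum (L : Matrix (Fin n) (Fin n) ℤ) (c : ℤ) :
    (labelPairs L c).card = ∑ i, (labelNbrs L c i).card := by
  simp only [labelPairs, labelNbrs, Finset.card_filter, Fintype.sum_prod_type]

namespace IsEncoding

lemma symm (hL : IsEncoding d L) (i j : Fin n) : L i j = L j i := hL.1 i j

lemma diag (hL : IsEncoding d L) (i : Fin n) : L i i = 0 := hL.2.1 i

lemma label (hL : IsEncoding d L) (i j : Fin n) :
    L i j = -1 ∨ L i j = 0 ∨ L i j = 1 ∨ L i j = 2 := hL.2.2.1 i j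

lemma rowSum (hL : IsEncoding d L) (i : Fin n) : ∑ j, L i j = (d i : ℤ) := hL.2.2.2 i

lemma ne_of_label_ne_zero (hL : IsEncoding d L) {i j : Fin n} (h : L i j ≠ 0) : i ≠ j := by
  rintro rfl
  exact h (hL.diag i)

lemma label_congr (hL : IsEncoding d L) {i j k l : Fin n} (h : s(i, j) = s(k, l)) :
    L i j = L k l := by
  rcases Sym2.eq_iff.1 h with ⟨rfl, rfl⟩ | ⟨rfl, rfl⟩
  exacts [rfl, hL.symm _ _]

lemma mk_mem_labelEdges (hL : IsEncoding d L) (hc : c ≠ 0) {i j : Fin n} :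
    s(i, j) ∈ labelEdges L c ↔ L i j = c := by
  constructor
  · rintro ⟨x, y, h, -, hxy⟩
    rw [hL.label_congr h, hxy]
  · intro h
    exact ⟨i, j, rfl, hL.ne_of_label_ne_zero (h ▸ hc), h⟩

lemma labelGraph_adj (hL : IsEncoding d L) (hc : c ≠ 0) {i j : Fin n} :
    (labelGraph L c).Adj i j ↔ L i j = c := by
  simp only [labelGraph, SimpleGraph.fromRel_adj, hL.symm j i, or_self, and_iff_right_iff_imp]
  intro h
  exact hL.ne_of_label_ne_zero (h ▸ hc)

lemma card_labelPairs (hL : IsEncoding d L) (hc : c ≠ 0) :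
    (labelPairs L c).card = 2 * (labelEdges L c).ncard := by
  have hdeg : ∀ i, (labelGraph L c).degree i = (labelNbrs L c i).card := fun i => by
    rw [← SimpleGraph.card_neighborFinset_eq_degree]
    congr 1
    ext j
    simp [hL.labelGraph_adj hc]
  have hedges : labelEdges L c = (labelGraph L c).edgeFinset := by
    ext ⟨i, j⟩
    simp [hL.mk_mem_labelEdges hc, hL.labelGraph_adj hc]
  rw [hedges, Set.ncard_coe_finset, ← SimpleGraph.sum_degrees_eq_twice_card_edges,
    card_labelPairs_eq_sum]
  exact Finset.sum_congr rfl fun i _ => (hdeg i).symm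

lemma card_labelNbrs_le (hL : IsEncoding d L) (hc : c ≠ 0) (i : Fin n) :
    (labelNbrs L c i).card ≤ (labelEdges L c).ncard := by
  rw [← Set.ncard_coe_finset]
  refine Set.ncard_le_ncard_of_injOn (fun j => s(i, j)) (fun j hj => ?_) ?_ (Set.toFinite _)
  · exact (hL.mk_mem_labelEdges hc).2 (by simpa using hj)
  · exact fun j _ k _ h => Sym2.congr_right.1 h

lemma card_labelNbrs_one (hL : IsEncoding d L) (i : Fin n) :
    (labelNbrs L 1 i).card + 2 * (labelNbrs L 2 i).card = d i + (labelNbrs L (-1) i).card := by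
  have hentry : ∀ j, L i j = (if L i j = 1 then 1 else 0) + 2 * (if L i j = 2 then 1 else 0)
      - (if L i j = -1 then 1 else 0) := fun j => by
    rcases hL.label i j with h | h | h | h <;> simp [h]
  have hsum := hL.rowSum i
  rw [Finset.sum_congr rfl fun j _ => hentry j] at hsum
  simp only [Finset.sum_sub_distrib, Finset.sum_add_distrib, ← Finset.mul_sum,
    Finset.sum_boole] at hsum
  simp only [labelNbrs]
  zify
  linarith

lemma card_labelPairs_one (hL : IsEncoding d L) :
    (labelPairs L 1).card + 4 * (labelEdges L 2).ncard = M d + 2 * (labelEdges L (-1)).ncard := by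
  have h := Finset.sum_congr (s₁ := Finset.univ) rfl fun i _ => hL.card_labelNbrs_one i
  simp only [Finset.sum_add_distrib, ← Finset.mul_sum, ← card_labelPairs_eq_sum,
    hL.card_labelPairs (c := 2) two_ne_zero, hL.card_labelPairs (c := -1) (by decide)] at h
  simp only [M]
  omega

lemma card_labelNbrs_one_le (hL : IsEncoding d L) (hd : ∀ v, d v ≤ D) (i : Fin n) :
    (labelNbrs L 1 i).card ≤ D + (labelEdges L (-1)).ncard := by
  have := hL.card_labelNbrs_one i
  have := hL.card_labelNbrs_le (c := -1) (by decide) i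
  have := hd i
  omega

end IsEncoding

lemma isEncoding_adjMat {Z : SimpleGraph (Fin n)} (hZ : Z ∈ Omega d) :
    IsEncoding d (adjMat Z) := by
  refine ⟨fun i j => by simp only [adjMat, Z.adj_comm], fun i => by simp [adjMat],
    fun i j => ?_, fun i => ?_⟩
  · by_cases h : Z.Adj i j <;> simp [adjMat, h]
  · simp only [adjMat, Finset.sum_boole, ← hZ i, Set.ncard_eq_toFinset_card', Set.toFinset_ofPred]

lemma card_labelPairs_adjMat {Z : SimpleGraph (Fin n)} (hZ : Z ∈ Omega d) :
    (labelPairs (adjMat Z) 1).card = M d := by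
  have hne : ∀ c : ℤ, c ≠ 0 → c ≠ 1 → labelEdges (adjMat Z) c = ∅ := fun c h0 h1 => by
    ext ⟨i, j⟩
    by_cases h : Z.Adj i j <;>
      simp [(isEncoding_adjMat hZ).mk_mem_labelEdges h0, adjMat, h, h0.symm, h1.symm]
  have := (isEncoding_adjMat hZ).card_labelPairs_one
  simpa [hne 2 (by decide) (by decide), hne (-1) (by decide) (by decide)] using this

end LabelCounts

section ClosingPairs

variable {d : Fin n → ℕ} {L : Matrix (Fin n) (Fin n) ℤ} {D : ℕ}

/-- The closed neighbourhood of `u` in the graph of all edges of `L`. -/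
def closedNbrs (L : Matrix (Fin n) (Fin n) ℤ) (u : Fin n) : Finset (Fin n) :=
  Finset.univ.filter fun j => j = u ∨ L u j ≠ 0

/-- The ordered `1`-labelled edges `(a, b)` which can close up an alternating walk from `u` to `v`
as `u a b v`: both `u a` and `b v` are pairs of distinct vertices labelled `0`. -/
def closingPairs (L : Matrix (Fin n) (Fin n) ℤ) (u v : Fin n) : Finset (Fin n × Fin n) :=
  (labelPairs L 1).filter fun e => e.1 ∉ closedNbrs L u ∧ e.2 ∉ closedNbrs L v

lemma card_closedNbrs_le (hL : IsEncoding d L) (hd : ∀ v, d v ≤ D) (u : Fin n) :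
    (closedNbrs L u).card ≤ 1 + D + 2 * (labelEdges L (-1)).ncard := by
  have hsub : closedNbrs L u ⊆
      insert u (labelNbrs L 1 u ∪ (labelNbrs L 2 u ∪ labelNbrs L (-1) u)) := fun j hj => by
    have := hL.label u j
    simp only [closedNbrs, Finset.mem_filter, Finset.mem_insert, Finset.mem_union,
      mem_labelNbrs] at hj ⊢
    tauto
  have := Finset.card_le_card hsub
  have := Finset.card_insert_le u (labelNbrs L 1 u ∪ (labelNbrs L 2 u ∪ labelNbrs L (-1) u))
  have := Finset.card_union_le (labelNbrs L 1 u) (labelNbrs L 2 u ∪ labelNbrs L (-1) u)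
  have := Finset.card_union_le (labelNbrs L 2 u) (labelNbrs L (-1) u)
  have := hL.card_labelNbrs_one u
  have := hL.card_labelNbrs_le (c := -1) (by decide) u
  have := hd u
  omega

lemma card_labelPairs_fst_mem_le (hL : IsEncoding d L) (hd : ∀ v, d v ≤ D) (S : Finset (Fin n)) :
    ((labelPairs L 1).filter fun e => e.1 ∈ S).card ≤
      S.card * D + 2 * (labelEdges L (-1)).ncard := by
  calc ((labelPairs L 1).filter fun e => e.1 ∈ S).card
      = ∑ i ∈ S, (labelNbrs L 1 i).card := by
        rw [← Finset.card_sigma]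
        exact Finset.card_bij' (fun e _ => ⟨e.1, e.2⟩) (fun e _ => (e.1, e.2))
          (by simp +contextual) (by simp +contextual) (by simp) (by simp)
    _ ≤ ∑ i ∈ S, (D + (labelNbrs L (-1) i).card) := Finset.sum_le_sum fun i _ => by
        have := hL.card_labelNbrs_one i
        have := hd i
        omega
    _ = S.card * D + ∑ i ∈ S, (labelNbrs L (-1) i).card := by
        rw [Finset.sum_add_distrib, Finset.sum_const, smul_eq_mul]
    _ ≤ S.card * D + 2 * (labelEdges L (-1)).ncard := by
        rw [← hL.card_labelPairs (by decide), card_labelPairs_eq_sum]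
        gcongr
        exact S.subset_univ

lemma card_labelPairs_snd_mem (hL : IsEncoding d L) (S : Finset (Fin n)) :
    ((labelPairs L 1).filter fun e => e.2 ∈ S).card =
      ((labelPairs L 1).filter fun e => e.1 ∈ S).card :=
  Finset.card_bij' (fun e _ => e.swap) (fun e _ => e.swap)
    (by simp +contextual [hL.symm]) (by simp +contextual [hL.symm]) (by simp) (by simp)

lemma le_card_closingPairs (hL : IsEncoding d L) (hd : ∀ v, d v ≤ D) (u v : Fin n) :
    M d ≤ (closingPairs L u v).card + 4 * (labelEdges L 2).ncard +
      2 * ((1 + D + 2 * (labelEdges L (-1)).ncard) * D) + 2 * (labelEdges L (-1)).ncard := by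
  set q := (labelEdges L (-1)).ncard
  have hbad : ∀ w, ((labelPairs L 1).filter fun e => e.1 ∈ closedNbrs L w).card ≤
      (1 + D + 2 * q) * D + 2 * q := fun w =>
    (card_labelPairs_fst_mem_le hL hd _).trans (by gcongr; exact card_closedNbrs_le hL hd w)
  have hcover : labelPairs L 1 ⊆ closingPairs L u v ∪
      ((labelPairs L 1).filter (fun e => e.1 ∈ closedNbrs L u) ∪
        (labelPairs L 1).filter fun e => e.2 ∈ closedNbrs L v) := fun e he => by
    simp only [closingPairs, Finset.mem_union, Finset.mem_filter, he, true_and]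
    tauto
  have := (Finset.card_le_card hcover).trans (Finset.card_union_le _ _)
  have := Finset.card_union_le ((labelPairs L 1).filter fun e => e.1 ∈ closedNbrs L u)
    ((labelPairs L 1).filter fun e => e.2 ∈ closedNbrs L v)
  have := card_labelPairs_snd_mem hL (closedNbrs L v)
  have := hbad u
  have := hbad v
  have := hL.card_labelPairs_one
  omega

end ClosingPairs

section AlternatingWalks

variable {V : Type*}

/-- The edges of the walk `x :: l`, paired with the alternating signs `ε, -ε, ε, …`. -/
def signedEdges : ℤ → V → List V → List (Sym2 V × ℤ)
  | _, _, [] => []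
  | ε, x, y :: l => (s(x, y), ε) :: signedEdges (-ε) y l

/-- The symmetric matrix which records by how much each label changes when every signed edge in
the list contributes its sign. -/
def labelChange (es : List (Sym2 V × ℤ)) : Matrix V V ℤ :=
  fun i j => (es.map fun t => if s(i, j) = t.1 then t.2 else 0).sum

lemma labelChange_symm (es : List (Sym2 V × ℤ)) (i j : V) :
    labelChange es i j = labelChange es j i := by
  simp only [labelChange, Sym2.eq_swap]

lemma labelChange_cons (t : Sym2 V × ℤ) (es : List (Sym2 V × ℤ)) (i j : V) :
    labelChange (t :: es) i j = (if s(i, j) = t.1 then t.2 else 0) + labelChange es i j := by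
  simp only [labelChange, List.map_cons, List.sum_cons]

lemma labelChange_eq_zero {es : List (Sym2 V × ℤ)} {i j : V} (h : s(i, j) ∉ es.map Prod.fst) :
    labelChange es i j = 0 := by
  induction es with
  | nil => rfl
  | cons t es ih =>
    simp only [List.map_cons, List.mem_cons, not_or] at h
    rw [labelChange_cons, if_neg h.1, ih h.2, zero_add]

lemma labelChange_of_mem {es : List (Sym2 V × ℤ)} (hes : (es.map Prod.fst).Nodup) {i j : V} {c : ℤ}
    (h : (s(i, j), c) ∈ es) : labelChange es i j = c := by
  induction es with
  | nil => simp at h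
  | cons t es ih =>
    simp only [List.map_cons, List.nodup_cons] at hes
    rw [labelChange_cons]
    rcases List.mem_cons.1 h with rfl | h
    · rw [if_pos rfl, labelChange_eq_zero hes.1, add_zero]
    · have hne : s(i, j) ≠ t.1 := fun he => hes.1 (he ▸ List.mem_map_of_mem (f := Prod.fst) h)
      rw [if_neg hne, ih hes.2 h, zero_add]

lemma sum_ite_mk_eq [Fintype V] {x y : V} (hxy : x ≠ y) (i : V) (ε : ℤ) :
    ∑ j, (if s(i, j) = s(x, y) then ε else 0) =
      (if i = x then ε else 0) + (if i = y then ε else 0) := by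
  have hentry : ∀ j, (if s(i, j) = s(x, y) then ε else 0) =
      (if j = y then (if i = x then ε else 0) else 0) +
        (if j = x then (if i = y then ε else 0) else 0) := fun j => by
    simp only [Sym2.eq_iff]
    grind
  simp only [hentry, Finset.sum_add_distrib, Finset.sum_ite_eq', Finset.mem_univ, if_true]

lemma sum_labelChange_signedEdges [Fintype V] (ε : ℤ) (x z : V) (l : List V)
    (hz : (x :: l).getLast (List.cons_ne_nil x l) = z)
    (hl : ∀ t ∈ signedEdges ε x l, ¬ t.1.IsDiag) (i : V) :
    ∑ j, labelChange (signedEdges ε x l) i j =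
      (if i = x then ε else 0) - (-1) ^ l.length * (if i = z then ε else 0) := by
  induction l generalizing ε x with
  | nil =>
    obtain rfl : x = z := by simpa using hz
    simp [signedEdges, labelChange]
  | cons y l ih =>
    simp only [signedEdges, List.forall_mem_cons, Sym2.mk_isDiag_iff] at hl
    simp only [signedEdges, labelChange_cons, Finset.sum_add_distrib, sum_ite_mk_eq hl.1,
      ih _ _ (by simpa using hz) hl.2, List.length_cons, pow_succ]
    split_ifs <;> ring

end AlternatingWalks

section Switchings

variable {d : Fin n → ℕ} {L L' : Matrix (Fin n) (Fin n) ℤ} {P : Set (Sym2 (Fin n))} {c : ℤ}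

/-- `L'` has row sums `d` and arises from `L` by removing the defects on the edges in `P`, without
affecting any other defect; labels `0` and `1` may be exchanged freely. -/
structure RemovesDefects (d : Fin n → ℕ) (P : Set (Sym2 (Fin n)))
    (L L' : Matrix (Fin n) (Fin n) ℤ) : Prop where
  symm : ∀ i j, L' i j = L' j i
  diag : ∀ i, L' i i = 0
  rowSum : ∀ i, ∑ j, L' i j = (d i : ℤ)
  of_mem : ∀ i j, s(i, j) ∈ P → L' i j = 0 ∨ L' i j = 1
  of_notMem : ∀ i j, s(i, j) ∉ P →
    L' i j = L i j ∨ (L' i j = 0 ∨ L' i j = 1) ∧ (L i j = 0 ∨ L i j = 1)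

namespace RemovesDefects

lemma label (h : RemovesDefects d P L L') (i j : Fin n) :
    L' i j = 0 ∨ L' i j = 1 ∨ L' i j = L i j := by
  by_cases hP : s(i, j) ∈ P
  · have := h.of_mem i j hP
    tauto
  · have := h.of_notMem i j hP
    tauto

lemma isEncoding (h : RemovesDefects d P L L') (hL : IsEncoding d L) : IsEncoding d L' := by
  refine ⟨h.symm, h.diag, fun i j => ?_, h.rowSum⟩
  have := h.label i j
  have := hL.label i j
  omega

lemma consistentWith (h : RemovesDefects d P L L') {Z : SimpleGraph (Fin n)}
    (hL : ConsistentWith L Z) : ConsistentWith L' Z := fun i j => by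
  have hZ : adjMat Z i j = 0 ∨ adjMat Z i j = 1 := by
    by_cases hij : Z.Adj i j <;> simp [adjMat, hij]
  have := h.label i j
  have := hL i j
  omega

lemma label_eq_iff (h : RemovesDefects d P L L') (hc : c = 2 ∨ c = -1) (i j : Fin n) :
    L' i j = c ↔ L i j = c ∧ s(i, j) ∉ P := by
  by_cases hP : s(i, j) ∈ P
  · have := h.of_mem i j hP
    simp only [hP, not_true_eq_false, and_false, iff_false]
    omega
  · have := h.of_notMem i j hP
    simp only [hP, not_false_eq_true, and_true]
    omega

lemma labelEdges_eq (h : RemovesDefects d P L L') (hc : c = 2 ∨ c = -1) (hL : IsEncoding d L) :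
    labelEdges L' c = labelEdges L c \ P := by
  have hc0 : c ≠ 0 := by omega
  ext ⟨i, j⟩
  simp only [Set.mem_sdiff, (h.isEncoding hL).mk_mem_labelEdges hc0, hL.mk_mem_labelEdges hc0,
    h.label_eq_iff hc]

end RemovesDefects

lemma removesDefects_closed_walk (hL : IsEncoding d L) {ε : ℤ} {x : Fin n} {l : List (Fin n)}
    (hclosed : (x :: l).getLast (List.cons_ne_nil x l) = x) (heven : Even l.length)
    (hnodup : ((signedEdges ε x l).map Prod.fst).Nodup)
    (hdiag : ∀ t ∈ signedEdges ε x l, ¬ t.1.IsDiag)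
    (hnew : ∀ i j k, (s(i, j), k) ∈ signedEdges ε x l →
      (L i j + k = 0 ∨ L i j + k = 1) ∧ (s(i, j) ∈ P ∨ L i j = 0 ∨ L i j = 1))
    (hP : P ⊆ {e | e ∈ (signedEdges ε x l).map Prod.fst}) :
    RemovesDefects d P L (L + labelChange (signedEdges ε x l)) := by
  have hmem : ∀ i j, s(i, j) ∈ (signedEdges ε x l).map Prod.fst →
      ((L + labelChange (signedEdges ε x l)) i j = 0 ∨
        (L + labelChange (signedEdges ε x l)) i j = 1) ∧
      (s(i, j) ∈ P ∨ L i j = 0 ∨ L i j = 1) := fun i j hij => by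
    obtain ⟨⟨e, k⟩, hk, rfl : e = s(i, j)⟩ := List.mem_map.1 hij
    rw [Matrix.add_apply, labelChange_of_mem hnodup hk]
    exact hnew i j k hk
  refine ⟨fun i j => ?_, fun i => ?_, fun i => ?_, fun i j hij => (hmem i j (hP hij)).1,
    fun i j hij => ?_⟩
  · rw [Matrix.add_apply, Matrix.add_apply, hL.symm, labelChange_symm]
  · have hi : s(i, i) ∉ (signedEdges ε x l).map Prod.fst := fun hi => by
      obtain ⟨t, ht, hti⟩ := List.mem_map.1 hi
      exact hdiag t ht (hti ▸ Sym2.mk_isDiag_iff.2 rfl)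
    rw [Matrix.add_apply, hL.diag, labelChange_eq_zero hi, add_zero]
  · simp only [Matrix.add_apply, Finset.sum_add_distrib, hL.rowSum,
      sum_labelChange_signedEdges ε x x l hclosed hdiag, heven.neg_one_pow, one_mul, sub_self,
      add_zero]
  · by_cases he : s(i, j) ∈ (signedEdges ε x l).map Prod.fst
    · exact Or.inr ⟨(hmem i j he).1, (hmem i j he).2.resolve_left hij⟩
    · exact Or.inl (by rw [Matrix.add_apply, labelChange_eq_zero he, add_zero])

lemma mem_closingPairs {u v p q : Fin n} :
    (p, q) ∈ closingPairs L u v ↔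
      L p q = 1 ∧ (p ≠ u ∧ L u p = 0) ∧ (q ≠ v ∧ L v q = 0) := by
  simp only [closingPairs, closedNbrs, Finset.mem_filter, mem_labelPairs, Finset.mem_univ,
    true_and, not_or, not_not]

lemma hexagon_nodup (hL : IsEncoding d L) {x y z w p q : Fin n} (hxy : L x y = -1)
    (hxz : L x z = 1 ∨ L x z = 2) (hyw : L y w = 1) (hpq : (p, q) ∈ closingPairs L w z) :
    ((signedEdges 1 x [y, w, p, q, z, x]).map Prod.fst).Nodup := by
  have hsymm := hL.symm
  have hdiag := hL.diag
  rw [mem_closingPairs] at hpq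
  simp only [signedEdges, List.map_cons, List.map_nil, List.nodup_cons, List.mem_cons,
    Sym2.eq_iff, List.not_mem_nil, or_false, not_false_eq_true, List.nodup_nil, and_true,
    not_or]
  split_ands <;> grind

lemma square_nodup (hL : IsEncoding d L) {x y p q : Fin n} (hxy : L x y = 2)
    (hpq : (p, q) ∈ closingPairs L y x) :
    ((signedEdges (-1) x [y, p, q, x]).map Prod.fst).Nodup := by
  have hsymm := hL.symm
  have hdiag := hL.diag
  rw [mem_closingPairs] at hpq
  simp only [signedEdges, List.map_cons, List.map_nil, List.nodup_cons, List.mem_cons,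
    Sym2.eq_iff, List.not_mem_nil, or_false, not_false_eq_true, List.nodup_nil, and_true,
    not_or]
  split_ands <;> grind

/-- The change of labels under the six-edge switching along the closed walk `x y w p q z x`, which
raises the label of `x y`. -/
def hexagonChange (x y w p q z : Fin n) : Matrix (Fin n) (Fin n) ℤ :=
  labelChange (signedEdges 1 x [y, w, p, q, z, x])

/-- The change of labels under the four-edge switching along the closed walk `x y p q x`, which
lowers the label of `x y`. -/
def squareChange (x y p q : Fin n) : Matrix (Fin n) (Fin n) ℤ :=
  labelChange (signedEdges (-1) x [y, p, q, x])

lemma removesDefects_hexagon (hL : IsEncoding d L) {x y z w p q : Fin n} (hxy : L x y = -1)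
    (hxz : L x z = 1 ∨ L x z = 2) (hyw : L y w = 1) (hpq : (p, q) ∈ closingPairs L w z) :
    RemovesDefects d {s(x, y), s(x, z)} L (L + hexagonChange x y w p q z) := by
  have hnodup := hexagon_nodup hL hxy hxz hyw hpq
  obtain ⟨hpq, ⟨hpw, hwp⟩, hqz, hzq⟩ := mem_closingPairs.1 hpq
  refine removesDefects_closed_walk hL (by simp) ⟨3, rfl⟩ hnodup ?_ ?_ ?_
  · have hyx := hL.ne_of_label_ne_zero (i := x) (j := y) (by omega)
    have hwy := hL.ne_of_label_ne_zero (i := y) (j := w) (by omega)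
    have hqp := hL.ne_of_label_ne_zero (i := p) (j := q) (by omega)
    have hzx := hL.ne_of_label_ne_zero (i := x) (j := z) (by omega)
    simp [signedEdges, hyx, hwy, hqp, hpw.symm, hqz, hzx.symm]
  · have hxz' : L x z + -1 = 0 ∨ L x z + -1 = 1 := by omega
    intro i j k hk
    simp only [signedEdges, neg_neg, List.mem_cons, Prod.mk.injEq, List.not_mem_nil,
      or_false] at hk
    rcases hk with ⟨h, rfl⟩ | ⟨h, rfl⟩ | ⟨h, rfl⟩ | ⟨h, rfl⟩ | ⟨h, rfl⟩ | ⟨h, rfl⟩ <;>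
      rw [h, hL.label_congr h] <;> simp [*, hL.symm q z, hL.symm z x, Sym2.eq_swap (a := z)]
  · rintro e (rfl | rfl) <;> simp [signedEdges, Sym2.eq_swap (a := z)]

lemma hexagon_label (hL : IsEncoding d L) {x y z w p q : Fin n} (hxy : L x y = -1)
    (hxz : L x z = 1 ∨ L x z = 2) (hyw : L y w = 1) (hpq : (p, q) ∈ closingPairs L w z) :
    (L + hexagonChange x y w p q z) w p = 1 ∧ (L + hexagonChange x y w p q z) q z = 1 ∧
      (L + hexagonChange x y w p q z) x z = L x z - 1 := by
  have hnodup := hexagon_nodup hL hxy hxz hyw hpq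
  obtain ⟨-, ⟨-, hwp⟩, -, hzq⟩ := mem_closingPairs.1 hpq
  simp only [hexagonChange, Matrix.add_apply]
  rw [labelChange_of_mem hnodup (i := w) (j := p) (c := 1) (by simp [signedEdges]),
    labelChange_of_mem hnodup (i := q) (j := z) (c := 1) (by simp [signedEdges]),
    labelChange_of_mem hnodup (i := x) (j := z) (c := -1)
      (by simp [signedEdges, Sym2.eq_swap (a := z)]), hwp, hL.symm q z, hzq]
  simp [sub_eq_add_neg]

lemma removesDefects_square (hL : IsEncoding d L) {x y p q : Fin n} (hxy : L x y = 2)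
    (hpq : (p, q) ∈ closingPairs L y x) :
    RemovesDefects d {s(x, y)} L (L + squareChange x y p q) := by
  have hnodup := square_nodup hL hxy hpq
  obtain ⟨hpq, ⟨hpy, hyp⟩, hqx, hxq⟩ := mem_closingPairs.1 hpq
  refine removesDefects_closed_walk hL (by simp) ⟨2, rfl⟩ hnodup ?_ ?_ ?_
  · have hyx := hL.ne_of_label_ne_zero (i := x) (j := y) (by omega)
    have hqp := hL.ne_of_label_ne_zero (i := p) (j := q) (by omega)
    simp [signedEdges, hyx, hpy.symm, hqp, hqx]
  · intro i j k hk
    simp only [signedEdges, neg_neg, List.mem_cons, Prod.mk.injEq, List.not_mem_nil,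
      or_false] at hk
    rcases hk with ⟨h, rfl⟩ | ⟨h, rfl⟩ | ⟨h, rfl⟩ | ⟨h, rfl⟩ <;>
      rw [h, hL.label_congr h] <;> simp [*, hL.symm q x]
  · rintro e rfl
    simp [signedEdges]

lemma square_label (hL : IsEncoding d L) {x y p q : Fin n} (hxy : L x y = 2)
    (hpq : (p, q) ∈ closingPairs L y x) :
    (L + squareChange x y p q) x y = 1 ∧ (L + squareChange x y p q) y p = 1 ∧
      (L + squareChange x y p q) q x = 1 := by
  have hnodup := square_nodup hL hxy hpq
  obtain ⟨-, ⟨-, hyp⟩, -, hxq⟩ := mem_closingPairs.1 hpq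
  simp only [squareChange, Matrix.add_apply]
  rw [labelChange_of_mem hnodup (i := x) (j := y) (c := -1) (by simp [signedEdges]),
    labelChange_of_mem hnodup (i := y) (j := p) (c := 1) (by simp [signedEdges]),
    labelChange_of_mem hnodup (i := q) (j := x) (c := 1) (by simp [signedEdges]),
    hxy, hyp, hL.symm q x, hxq]
  norm_num

end Switchings

section DoubleCounting

lemma card_mul_le_card_mul_sigma {α τ : Type*} {X : Finset α} {F : α → Finset τ} {A k : ℕ}
    (h : ∀ a ∈ X, A ≤ k * (F a).card) : A * X.card ≤ k * (X.sigma F).card := by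
  rw [Finset.card_sigma, Finset.mul_sum, mul_comm A]
  exact Finset.card_nsmul_le_sum X _ A h

lemma card_sigma_le_card_mul {α τ : Type*} {X : Finset α} {F : α → Finset τ} {B : ℕ}
    (h : ∀ a ∈ X, (F a).card ≤ B) : (X.sigma F).card ≤ X.card * B := by
  rw [Finset.card_sigma]
  exact Finset.sum_le_card_nsmul X _ B h

/-- Double counting of moves `a ↦ a + δ t`: a move is determined by its code and its result, and
the code is limited by the result. -/
lemma card_mul_le_card_mul_of_moves {α τ κ : Type*} [Add α] [IsRightCancelAdd α]
    {X Y : Finset α} {F : α → Finset τ} {R : α → Finset κ} {δ : τ → α} {code : τ → κ} {A B k : ℕ}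
    (hcode : Function.Injective code) (hF : ∀ a ∈ X, A ≤ k * (F a).card)
    (hmove : ∀ a ∈ X, ∀ t ∈ F a, a + δ t ∈ Y ∧ code t ∈ R (a + δ t))
    (hR : ∀ b ∈ Y, (R b).card ≤ B) : A * X.card ≤ k * B * Y.card := by
  have hinj : (X.sigma F).card ≤ (Y.sigma R).card := by
    refine Finset.card_le_card_of_injOn (fun m => ⟨m.1 + δ m.2, code m.2⟩) ?_ ?_
    · rintro ⟨a, t⟩ h
      simp only [Finset.mem_coe, Finset.mem_sigma] at h ⊢
      exact hmove a h.1 t h.2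
    · rintro ⟨a, t⟩ - ⟨a', t'⟩ - h
      simp only [Sigma.mk.injEq, heq_eq_eq] at h
      obtain rfl := hcode h.2
      obtain rfl := add_right_cancel h.1
      rfl
  calc A * X.card ≤ k * (X.sigma F).card := card_mul_le_card_mul_sigma hF
    _ ≤ k * (Y.card * B) := by gcongr; exact hinj.trans (card_sigma_le_card_mul hR)
    _ = k * B * Y.card := by ring

end DoubleCounting

section DefectClasses

variable {d : Fin n → ℕ} {Z : SimpleGraph (Fin n)} {L L' : Matrix (Fin n) (Fin n) ℤ}
  {P : Set (Sym2 (Fin n))} {p q D : ℕ}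

/-- Every vertex which lies on both a `2`-defect and a `(-1)`-defect lies on only one `2`-defect
and has degree at least three. Good encodings have this property, and removing defects preserves
it. -/
def DefectLocal (d : Fin n → ℕ) (L : Matrix (Fin n) (Fin n) ℤ) : Prop :=
  ∀ x x' y z, L y x = 2 → L y x' = 2 → L y z = -1 → x = x' ∧ 3 ≤ d y

/-- `L` is an encoding consistent with `Z`, with local defects, of which `p` are `2`-defect edges
and `q` are `(-1)`-defect edges. -/
structure HasDefectCounts (d : Fin n → ℕ) (Z : SimpleGraph (Fin n)) (p q : ℕ)
    (L : Matrix (Fin n) (Fin n) ℤ) : Prop where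
  isEncoding : IsEncoding d L
  consistentWith : ConsistentWith L Z
  defectLocal : DefectLocal d L
  ncard_two : (labelEdges L 2).ncard = p
  ncard_neg_one : (labelEdges L (-1)).ncard = q

/-- The finite set of the matrices `L` with `HasDefectCounts d Z p q L`. -/
def defectClass (d : Fin n → ℕ) (Z : SimpleGraph (Fin n)) (p q : ℕ) :
    Finset (Matrix (Fin n) (Fin n) ℤ) :=
  (Fintype.piFinset fun _ => Fintype.piFinset fun _ => {-1, 0, 1, 2}).filter
    (HasDefectCounts d Z p q)

/-- The encodings with one `2`-defect edge and three `(-1)`-defect edges, in which the `2`-defect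
edge is adjacent to a `(-1)`-defect edge. -/
def mixedClass (d : Fin n → ℕ) (Z : SimpleGraph (Fin n)) : Finset (Matrix (Fin n) (Fin n) ℤ) :=
  (defectClass d Z 1 3).filter fun L => ∃ x y z, L x y = -1 ∧ L x z = 2

@[simp]
lemma mem_defectClass : L ∈ defectClass d Z p q ↔ HasDefectCounts d Z p q L := by
  refine ⟨fun h => (Finset.mem_filter.1 h).2, fun h => Finset.mem_filter.2 ⟨?_, h⟩⟩
  refine Fintype.mem_piFinset.2 fun i => Fintype.mem_piFinset.2 fun j => ?_
  simpa only [Finset.mem_insert, Finset.mem_singleton] using h.isEncoding.label i j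

lemma ConsistentWith.adj_of_label_eq_neg_one (h : ConsistentWith L Z) {x y : Fin n}
    (hxy : L x y = -1) : Z.Adj x y := by
  by_contra hadj
  have := h x y
  simp [adjMat, hadj, hxy] at this

lemma one_le_degree (hZ : Z ∈ Omega d) {x y : Fin n} (hxy : Z.Adj x y) : 1 ≤ d x := by
  rw [← hZ x]
  exact (Set.ncard_pos (Set.toFinite _)).2 ⟨y, hxy⟩

lemma RemovesDefects.defectLocal (h : RemovesDefects d P L L') (hL : DefectLocal d L) :
    DefectLocal d L' := by
  intro x x' y z hx hx' hz
  rw [h.label_eq_iff (by norm_num)] at hx hx' hz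
  exact hL x x' y z hx.1 hx'.1 hz.1

namespace HasDefectCounts

lemma of_removesDefects (hL : HasDefectCounts d Z p q L) (h : RemovesDefects d P L L') {p' q' : ℕ}
    (htwo : (labelEdges L 2 \ P).ncard = p') (hneg : (labelEdges L (-1) \ P).ncard = q') :
    HasDefectCounts d Z p' q' L' where
  isEncoding := h.isEncoding hL.isEncoding
  consistentWith := h.consistentWith hL.consistentWith
  defectLocal := h.defectLocal hL.defectLocal
  ncard_two := by rw [h.labelEdges_eq (by norm_num) hL.isEncoding, htwo]
  ncard_neg_one := by rw [h.labelEdges_eq (by norm_num) hL.isEncoding, hneg]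

lemma two_le_card_labelNbrs_one (hL : HasDefectCounts d Z p q L) (hZ : Z ∈ Omega d)
    {x y : Fin n} (hxy : L x y = -1) : 2 ≤ (labelNbrs L 1 x).card := by
  have hcount := hL.isEncoding.card_labelNbrs_one x
  have hneg : 1 ≤ (labelNbrs L (-1) x).card := Finset.card_pos.2 ⟨y, mem_labelNbrs.2 hxy⟩
  have hdeg := one_le_degree hZ (hL.consistentWith.adj_of_label_eq_neg_one hxy)
  rcases (labelNbrs L 2 x).eq_empty_or_nonempty with h2 | ⟨z, hz⟩
  · rw [h2, Finset.card_empty] at hcount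
    omega
  · have hunique : (labelNbrs L 2 x).card ≤ 1 := Finset.card_le_one.2 fun a ha b hb =>
      (hL.defectLocal a b x y (mem_labelNbrs.1 ha) (mem_labelNbrs.1 hb) hxy).1
    have := (hL.defectLocal z z x y (mem_labelNbrs.1 hz) (mem_labelNbrs.1 hz) hxy).2
    omega

lemma le_card_closingPairs_of_neg (hL : HasDefectCounts d Z p q L) (hd : ∀ v, d v ≤ D)
    (hD : 3 ≤ D) (hM : 9 * D ^ 2 ≤ M d) (hp : p ≤ 2) (hq : 1 ≤ q) (hq' : q ≤ 3)
    (hpq : p + q ≤ 4) (u v : Fin n) :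
    M d ≤ 3 * q * (closingPairs L u v).card := by
  have h := le_card_closingPairs hL.isEncoding hd u v
  rw [hL.ncard_two, hL.ncard_neg_one] at h
  interval_cases q <;> nlinarith

lemma le_card_closingPairs_of_no_neg (hL : HasDefectCounts d Z p 0 L) (hd : ∀ v, d v ≤ D)
    (hD : 3 ≤ D) (hM : 9 * D ^ 2 ≤ M d) (hp : p ≤ 2) (u v : Fin n) :
    M d ≤ 2 * (closingPairs L u v).card := by
  have h := le_card_closingPairs hL.isEncoding hd u v
  rw [hL.ncard_two, hL.ncard_neg_one] at h
  nlinarith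

end HasDefectCounts

end DefectClasses

section ClassRatios

variable {d : Fin n → ℕ} {Z : SimpleGraph (Fin n)} {L : Matrix (Fin n) (Fin n) ℤ} {p q D : ℕ}

namespace HasDefectCounts

lemma hexagon_of_one (hL : HasDefectCounts d Z p (q + 1) L) {x y z w a b : Fin n}
    (hxy : L x y = -1) (hxz : L x z = 1) (hyw : L y w = 1) (hab : (a, b) ∈ closingPairs L w z) :
    HasDefectCounts d Z p q (L + hexagonChange x y w a b z) := by
  have hmem {c : ℤ} (hc : c ≠ 0) {i j : Fin n} :=
    hL.isEncoding.mk_mem_labelEdges hc (i := i) (j := j)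
  refine hL.of_removesDefects
    (removesDefects_hexagon hL.isEncoding hxy (Or.inl hxz) hyw hab) ?_ ?_
  · rw [Set.sdiff_insert_of_notMem (by simp [hmem, hxy]),
      Set.sdiff_singleton_eq_self (by simp [hmem, hxz]), hL.ncard_two]
  · rw [Set.pair_comm, Set.sdiff_insert_of_notMem (by simp [hmem, hxz]),
      Set.ncard_sdiff_singleton_of_mem (by simp [hmem, hxy]), hL.ncard_neg_one,
      Nat.add_sub_cancel]

lemma hexagon_of_two (hL : HasDefectCounts d Z (p + 1) (q + 1) L) {x y z w a b : Fin n}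
    (hxy : L x y = -1) (hxz : L x z = 2) (hyw : L y w = 1) (hab : (a, b) ∈ closingPairs L w z) :
    HasDefectCounts d Z p q (L + hexagonChange x y w a b z) := by
  have hmem {c : ℤ} (hc : c ≠ 0) {i j : Fin n} :=
    hL.isEncoding.mk_mem_labelEdges hc (i := i) (j := j)
  refine hL.of_removesDefects
    (removesDefects_hexagon hL.isEncoding hxy (Or.inr hxz) hyw hab) ?_ ?_
  · rw [Set.sdiff_insert_of_notMem (by simp [hmem, hxy]),
      Set.ncard_sdiff_singleton_of_mem (by simp [hmem, hxz]), hL.ncard_two, Nat.add_sub_cancel]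
  · rw [Set.pair_comm, Set.sdiff_insert_of_notMem (by simp [hmem, hxz]),
      Set.ncard_sdiff_singleton_of_mem (by simp [hmem, hxy]), hL.ncard_neg_one,
      Nat.add_sub_cancel]

lemma square (hL : HasDefectCounts d Z (p + 1) 0 L) {x y a b : Fin n}
    (hxy : L x y = 2) (hab : (a, b) ∈ closingPairs L y x) :
    HasDefectCounts d Z p 0 (L + squareChange x y a b) := by
  have hmem {c : ℤ} (hc : c ≠ 0) {i j : Fin n} :=
    hL.isEncoding.mk_mem_labelEdges hc (i := i) (j := j)
  refine hL.of_removesDefects (removesDefects_square hL.isEncoding hxy hab) ?_ ?_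
  · rw [Set.ncard_sdiff_singleton_of_mem (by simp [hmem, hxy]), hL.ncard_two, Nat.add_sub_cancel]
  · rw [Set.sdiff_singleton_eq_self (by simp [hmem, hxy]), hL.ncard_neg_one]

lemma card_labelPairs_one_le (hL : HasDefectCounts d Z p q L) :
    (labelPairs L 1).card ≤ M d + 2 * q := by
  have := hL.isEncoding.card_labelPairs_one
  rw [hL.ncard_neg_one] at this
  omega

lemma card_labelNbrs_one_le (hL : HasDefectCounts d Z p q L) (hd : ∀ v, d v ≤ D) (i : Fin n) :
    (labelNbrs L 1 i).card ≤ D + q :=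
  (hL.isEncoding.card_labelNbrs_one_le hd i).trans_eq (by rw [hL.ncard_neg_one])

end HasDefectCounts

/-- The six-edge switchings which raise a `(-1)`-defect `x y` and lower an edge `x z` with label
`c`, recorded as `⟨(x, y), ⟨(z, w), (a, b)⟩⟩`. -/
def hexagonMoves (c : ℤ) (L : Matrix (Fin n) (Fin n) ℤ) :
    Finset ((_ : Fin n × Fin n) × (_ : Fin n × Fin n) × (Fin n × Fin n)) :=
  (labelPairs L (-1)).sigma fun e =>
    (labelNbrs L c e.1 ×ˢ labelNbrs L 1 e.2).sigma fun f => closingPairs L f.2 f.1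

lemma mem_hexagonMoves {c : ℤ} {x y z w a b : Fin n} :
    ⟨(x, y), ⟨(z, w), (a, b)⟩⟩ ∈ hexagonMoves c L ↔
      L x y = -1 ∧ (L x z = c ∧ L y w = 1) ∧ (a, b) ∈ closingPairs L w z := by
  simp only [hexagonMoves, Finset.mem_sigma, mem_labelPairs, Finset.mem_product, mem_labelNbrs]

lemma le_mul_card_sigma_closingPairs {A B G K : ℕ} {S T : Finset (Fin n)} (hS : A ≤ S.card)
    (hT : B ≤ T.card) (hG : ∀ u v, G ≤ K * (closingPairs L u v).card) :
    A * B * G ≤ K * ((S ×ˢ T).sigma fun f => closingPairs L f.2 f.1).card :=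
  calc A * B * G ≤ G * (S ×ˢ T).card := by
        rw [Finset.card_product, mul_comm]
        gcongr
    _ ≤ _ := card_mul_le_card_mul_sigma fun f _ => hG f.2 f.1

lemma le_card_hexagonMoves_one (hL : HasDefectCounts d Z p (q + 1) L) (hZ : Z ∈ Omega d)
    (hd : ∀ v, d v ≤ D) (hD : 3 ≤ D) (hM : 9 * D ^ 2 ≤ M d) (hp : p ≤ 2) (hq : q ≤ 2)
    (hpq : p + q ≤ 3) : 8 * M d ≤ 3 * (hexagonMoves 1 L).card := by
  have hmoves : 2 * 2 * M d * (labelPairs L (-1)).card ≤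
      3 * (q + 1) * (hexagonMoves 1 L).card :=
    card_mul_le_card_mul_sigma fun e he => le_mul_card_sigma_closingPairs
      (hL.two_le_card_labelNbrs_one hZ (mem_labelPairs.1 he))
      (hL.two_le_card_labelNbrs_one hZ (hL.isEncoding.symm _ _ ▸ mem_labelPairs.1 he))
      (hL.le_card_closingPairs_of_neg hd hD hM hp (by omega) (by omega) (by omega))
  rw [hL.isEncoding.card_labelPairs (by decide), hL.ncard_neg_one] at hmoves
  have : (q + 1) * (8 * M d) ≤ (q + 1) * (3 * (hexagonMoves 1 L).card) := by linarith
  exact Nat.le_of_mul_le_mul_left this q.succ_pos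

lemma mul_card_defectClass_succ_le (hZ : Z ∈ Omega d) (hd : ∀ v, d v ≤ D) (hD : 3 ≤ D)
    (hM : 9 * D ^ 2 ≤ M d) (hp : p ≤ 2) (hq : q ≤ 2) (hpq : p + q ≤ 3) :
    8 * M d * (defectClass d Z p (q + 1)).card ≤
      3 * (M d * ((M d + 4) * (M d + 4))) * (defectClass d Z p q).card := by
  refine card_mul_le_card_mul_of_moves (F := hexagonMoves 1)
    (R := fun L' => labelPairs (adjMat Z) 1 ×ˢ labelPairs L' 1 ×ˢ labelPairs L' 1)
    (δ := fun ⟨(x, y), ⟨(z, w), (a, b)⟩⟩ => hexagonChange x y w a b z)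
    (code := fun ⟨(x, y), ⟨(z, w), (a, b)⟩⟩ => ((x, y), (w, a), (b, z)))
    ?_ (fun L hL => ?_) ?_ (fun L' hL' => ?_)
  · rintro ⟨⟨x, y⟩, ⟨z, w⟩, ⟨a, b⟩⟩ ⟨⟨x', y'⟩, ⟨z', w'⟩, ⟨a', b'⟩⟩ h
    simp only [Prod.mk.injEq] at h
    obtain ⟨⟨rfl, rfl⟩, ⟨rfl, rfl⟩, rfl, rfl⟩ := h
    rfl
  · exact le_card_hexagonMoves_one (mem_defectClass.1 hL) hZ hd hD hM hp hq hpq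
  · rintro L hL ⟨⟨x, y⟩, ⟨z, w⟩, ⟨a, b⟩⟩ ht
    rw [mem_defectClass] at hL
    obtain ⟨hxy, ⟨hxz, hyw⟩, hab⟩ := mem_hexagonMoves.1 ht
    have hlabel := hexagon_label hL.isEncoding hxy (Or.inl hxz) hyw hab
    have hadj := hL.consistentWith.adj_of_label_eq_neg_one hxy
    refine ⟨mem_defectClass.2 (hL.hexagon_of_one hxy hxz hyw hab), ?_⟩
    simp only [Finset.mem_product, mem_labelPairs, adjMat, hadj, if_true, hlabel, and_self]
  · have hone : (labelPairs L' 1).card ≤ M d + 4 :=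
      (mem_defectClass.1 hL').card_labelPairs_one_le.trans (by omega)
    rw [Finset.card_product, Finset.card_product, card_labelPairs_adjMat hZ]
    gcongr

lemma two_mul_card_defectClass_succ_le (hZ : Z ∈ Omega d) (hd : ∀ v, d v ≤ D) (hD : 3 ≤ D)
    (hM : 9 * D ^ 2 ≤ M d) (hp : p ≤ 2) (hq : q ≤ 2) (hpq : p + q ≤ 3) :
    2 * (defectClass d Z p (q + 1)).card ≤ M d ^ 2 * (defectClass d Z p q).card := by
  have h81 : 81 ≤ M d := by nlinarith
  have hsq : 3 * ((M d + 4) * (M d + 4)) ≤ 4 * M d ^ 2 := by nlinarith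
  have hpos : 0 < 4 * M d := by omega
  have hcount := mul_card_defectClass_succ_le hZ hd hD hM hp hq hpq
  refine Nat.le_of_mul_le_mul_left ?_ hpos
  calc 4 * M d * (2 * (defectClass d Z p (q + 1)).card)
      = 8 * M d * (defectClass d Z p (q + 1)).card := by ring
    _ ≤ M d * (3 * ((M d + 4) * (M d + 4))) * (defectClass d Z p q).card := by linarith
    _ ≤ M d * (4 * M d ^ 2) * (defectClass d Z p q).card := by gcongr
    _ = 4 * M d * (M d ^ 2 * (defectClass d Z p q).card) := by ring

lemma le_card_hexagonMoves_two (hL : HasDefectCounts d Z 1 3 L) (hZ : Z ∈ Omega d)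
    (hd : ∀ v, d v ≤ D) (hD : 3 ≤ D) (hM : 9 * D ^ 2 ≤ M d) {x y z : Fin n} (hxy : L x y = -1)
    (hxz : L x z = 2) : 2 * M d ≤ 9 * (hexagonMoves 2 L).card := by
  have hxz' : 1 ≤ (labelNbrs L 2 x).card := Finset.card_pos.2 ⟨z, mem_labelNbrs.2 hxz⟩
  have hyx := hL.two_le_card_labelNbrs_one hZ (hL.isEncoding.symm x y ▸ hxy)
  have hfibre := le_mul_card_sigma_closingPairs hxz' hyx
    (hL.le_card_closingPairs_of_neg hd hD hM one_le_two (by omega) le_rfl le_rfl)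
  have hle := Finset.single_le_sum (s := labelPairs L (-1))
    (f := fun e => ((labelNbrs L 2 e.1 ×ˢ labelNbrs L 1 e.2).sigma
      fun f => closingPairs L f.2 f.1).card)
    (fun _ _ => Nat.zero_le _) (mem_labelPairs.2 hxy : (x, y) ∈ _)
  rw [hexagonMoves, Finset.card_sigma]
  linarith

lemma card_labelOnePaths_le (hL : HasDefectCounts d Z p q L) (hd : ∀ v, d v ≤ D) (x : Fin n) :
    ((labelNbrs L 1 x).sigma fun z => labelNbrs L 1 z).card ≤ (D + q) * (D + q) :=
  (card_sigma_le_card_mul fun z _ => hL.card_labelNbrs_one_le hd z).trans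
    (Nat.mul_le_mul_right _ (hL.card_labelNbrs_one_le hd x))

/-- After the switching, `z` is a neighbour of `x` and `b` one of `z` along edges labelled `1`,
which limits the number of preimages. -/
lemma mul_card_mixedClass_le (hZ : Z ∈ Omega d) (hd : ∀ v, d v ≤ D) (hD : 3 ≤ D)
    (hM : 9 * D ^ 2 ≤ M d) :
    2 * M d * (mixedClass d Z).card ≤
      9 * (M d * (M d + 4) * ((D + 2) * (D + 2))) * (defectClass d Z 0 2).card := by
  refine card_mul_le_card_mul_of_moves (F := hexagonMoves 2)
    (R := fun L' => (labelPairs (adjMat Z) 1 ×ˢ labelPairs L' 1).sigma fun e =>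
      (labelNbrs L' 1 e.1.1).sigma fun z => labelNbrs L' 1 z)
    (δ := fun ⟨(x, y), ⟨(z, w), (a, b)⟩⟩ => hexagonChange x y w a b z)
    (code := fun ⟨(x, y), ⟨(z, w), (a, b)⟩⟩ => ⟨((x, y), (w, a)), ⟨z, b⟩⟩)
    ?_ (fun L hL => ?_) ?_ (fun L' hL' => ?_)
  · rintro ⟨⟨x, y⟩, ⟨z, w⟩, ⟨a, b⟩⟩ ⟨⟨x', y'⟩, ⟨z', w'⟩, ⟨a', b'⟩⟩ h
    simp only [Sigma.mk.injEq, Prod.mk.injEq, heq_eq_eq] at h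
    obtain ⟨⟨⟨rfl, rfl⟩, rfl, rfl⟩, rfl, rfl⟩ := h
    rfl
  · obtain ⟨hL, x, y, z, hxy, hxz⟩ := Finset.mem_filter.1 hL
    exact le_card_hexagonMoves_two (mem_defectClass.1 hL) hZ hd hD hM hxy hxz
  · rintro L hL ⟨⟨x, y⟩, ⟨z, w⟩, ⟨a, b⟩⟩ ht
    replace hL := mem_defectClass.1 (Finset.mem_filter.1 hL).1
    obtain ⟨hxy, ⟨hxz, hyw⟩, hab⟩ := mem_hexagonMoves.1 ht
    have hL' := hL.hexagon_of_two hxy hxz hyw hab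
    obtain ⟨hwa, hbz, hxz'⟩ := hexagon_label hL.isEncoding hxy (Or.inr hxz) hyw hab
    have hadj := hL.consistentWith.adj_of_label_eq_neg_one hxy
    refine ⟨mem_defectClass.2 hL', ?_⟩
    simp only [Finset.mem_product, Finset.mem_sigma, mem_labelPairs, mem_labelNbrs, adjMat, hadj,
      if_true, hwa, hxz', hxz, hL'.isEncoding.symm z b, hbz]
    norm_num
  · have hL' := mem_defectClass.1 hL'
    refine (card_sigma_le_card_mul fun e _ => card_labelOnePaths_le hL' hd e.1.1).trans ?_
    rw [Finset.card_product, card_labelPairs_adjMat hZ]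
    gcongr
    exact hL'.card_labelPairs_one_le

lemma two_mul_card_mixedClass_le (hZ : Z ∈ Omega d) (hd : ∀ v, d v ≤ D) (hD : 3 ≤ D)
    (hM : 9 * D ^ 2 ≤ M d) :
    2 * (mixedClass d Z).card ≤ 3 * M d ^ 2 * (defectClass d Z 0 2).card := by
  have h81 : 81 ≤ M d := by nlinarith
  have hpos : 0 < 729 * M d := by omega
  have hD' : 81 * ((D + 2) * (D + 2)) ≤ 25 * M d := by nlinarith
  have hM' : 81 * (M d + 4) ≤ 85 * M d := by omega
  have hcount := mul_card_mixedClass_le hZ hd hD hM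
  refine Nat.le_of_mul_le_mul_left ?_ hpos
  calc 729 * M d * (2 * (mixedClass d Z).card)
      = 729 * (2 * M d * (mixedClass d Z).card) := by ring
    _ ≤ 729 * (9 * (M d * (M d + 4) * ((D + 2) * (D + 2))) * (defectClass d Z 0 2).card) := by
        gcongr
    _ = M d * (81 * (M d + 4)) * (81 * ((D + 2) * (D + 2))) * (defectClass d Z 0 2).card := by ring
    _ ≤ M d * (85 * M d) * (25 * M d) * (defectClass d Z 0 2).card := by gcongr
    _ = 2125 * (M d ^ 3 * (defectClass d Z 0 2).card) := by ring
    _ ≤ 2187 * (M d ^ 3 * (defectClass d Z 0 2).card) := by gcongr; norm_num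
    _ = 729 * M d * (3 * M d ^ 2 * (defectClass d Z 0 2).card) := by ring

/-- The result of the four-edge switching contains the path `a y x b` with labels `1`. -/
lemma mul_card_defectClass_succ_zero_le (hd : ∀ v, d v ≤ D) (hD : 3 ≤ D) (hM : 9 * D ^ 2 ≤ M d)
    (hp : p ≤ 1) :
    M d * (defectClass d Z (p + 1) 0).card ≤ M d * (D * D) * (defectClass d Z p 0).card := by
  rw [← one_mul (M d * (D * D))]
  refine card_mul_le_card_mul_of_moves
    (F := fun L => (labelPairs L 2).sigma fun e => closingPairs L e.2 e.1)
    (R := fun L' => (labelPairs L' 1).sigma fun e => labelNbrs L' 1 e.2 ×ˢ labelNbrs L' 1 e.1)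
    (δ := fun ⟨(x, y), (a, b)⟩ => squareChange x y a b) (code := id)
    Function.injective_id (fun L hL => ?_) ?_ (fun L' hL' => ?_)
  · rw [mem_defectClass] at hL
    have hmoves := card_mul_le_card_mul_sigma (X := labelPairs L 2)
      fun e _ => hL.le_card_closingPairs_of_no_neg hd hD hM (by omega) e.2 e.1
    rw [hL.isEncoding.card_labelPairs two_ne_zero, hL.ncard_two] at hmoves
    nlinarith
  · rintro L hL ⟨⟨x, y⟩, ⟨a, b⟩⟩ ht
    rw [mem_defectClass] at hL
    simp only [Finset.mem_sigma, mem_labelPairs] at ht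
    have hL' := hL.square ht.1 ht.2
    obtain ⟨hxy, hya, hbx⟩ := square_label hL.isEncoding ht.1 ht.2
    refine ⟨mem_defectClass.2 hL', ?_⟩
    simp only [id, Finset.mem_product, Finset.mem_sigma, mem_labelPairs, mem_labelNbrs, hxy, hya,
      hL'.isEncoding.symm x b, hbx, and_self]
  · rw [mem_defectClass] at hL'
    refine (card_sigma_le_card_mul (B := D * D) fun e _ => ?_).trans
      (Nat.mul_le_mul_right _ hL'.card_labelPairs_one_le)
    rw [Finset.card_product]
    exact Nat.mul_le_mul (hL'.card_labelNbrs_one_le hd _) (hL'.card_labelNbrs_one_le hd _)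

lemma two_mul_card_defectClass_succ_zero_le (hd : ∀ v, d v ≤ D) (hD : 3 ≤ D)
    (hM : 9 * D ^ 2 ≤ M d) (hp : p ≤ 1) :
    2 * (defectClass d Z (p + 1) 0).card ≤ M d * (defectClass d Z p 0).card := by
  have hpos : 0 < M d := by nlinarith
  have hcount := mul_card_defectClass_succ_zero_le (Z := Z) hd hD hM hp
  refine Nat.le_of_mul_le_mul_left ?_ hpos
  calc M d * (2 * (defectClass d Z (p + 1) 0).card)
      = 2 * (M d * (defectClass d Z (p + 1) 0).card) := by ring
    _ ≤ 2 * (M d * (D * D) * (defectClass d Z p 0).card) := by gcongr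
    _ = M d * ((2 * D ^ 2) * (defectClass d Z p 0).card) := by ring
    _ ≤ M d * (M d * (defectClass d Z p 0).card) := by gcongr; omega

end ClassRatios

section Classification

variable {d : Fin n → ℕ} {Z : SimpleGraph (Fin n)} {L : Matrix (Fin n) (Fin n) ℤ} {p q : ℕ}

lemma DefectsWithin.labelEdges_subset {S : Set (Sym2 (Fin n) × ℤ)} (h : DefectsWithin L S) {c : ℤ}
    (hc : c = 2 ∨ c = -1) : labelEdges L c ⊆ {e | (e, c) ∈ S} := by
  rintro _ ⟨x, y, rfl, hxy, rfl⟩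
  exact h x y hxy hc

/-- A common shape of the five configurations, with centre `b`. -/
lemma ValidEncoding.exists_defectsWithin (h : ValidEncoding d L) :
    ∃ (b r s t e f : Fin n) (ℓ : ℤ), (ℓ = -1 ∨ ℓ = 2) ∧ r ≠ s ∧ r ≠ t ∧ b ≠ e ∧ b ≠ f ∧
      DefectsWithin L {(s(b, r), 2), (s(b, s), -1), (s(b, t), -1), (s(e, f), ℓ)} := by
  obtain ⟨-, -, a, b, c, u, e, f, ℓ, hℓ, h⟩ := h
  have two_last : ∀ A B C E : Sym2 (Fin n) × ℤ,
      ({A, B, C, E} : Set (Sym2 (Fin n) × ℤ)) = {C, A, B, E} := fun A B C E => by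
    rw [Set.insert_comm B, Set.insert_comm A]
  rcases h with ⟨hne, -, he, hf, hD⟩ | ⟨hne, hD⟩ | ⟨hne, hD⟩ | ⟨hne, hD⟩ | ⟨hne, hD⟩ <;>
    simp only [List.pairwise_cons, List.mem_cons, Set.mem_insert_iff, not_or] at * <;>
    rw [Sym2.eq_swap (a := a)] at hD
  · exact ⟨b, a, c, u, e, f, ℓ, hℓ, by grind, by grind, by grind, by grind, hD⟩
  · exact ⟨b, a, c, u, u, e, ℓ, hℓ, by grind, by grind, by grind, by grind, hD⟩
  · exact ⟨b, u, a, c, u, e, ℓ, hℓ, by grind, by grind, by grind, by grind, two_last .. ▸ hD⟩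
  · exact ⟨b, u, a, c, u, c, ℓ, hℓ, by grind, by grind, by grind, by grind, two_last .. ▸ hD⟩
  · exact ⟨b, a, c, u, u, c, ℓ, hℓ, by grind, by grind, by grind, by grind, hD⟩

/-- The two alternatives correspond to the two possible labels of the fourth defect `ef`. -/
lemma ValidEncoding.exists_labelEdges_subset (h : ValidEncoding d L) :
    ∃ b r s t e f : Fin n, r ≠ s ∧ r ≠ t ∧ b ≠ e ∧ b ≠ f ∧
      ((labelEdges L 2 ⊆ {s(b, r)} ∧ labelEdges L (-1) ⊆ {s(b, s), s(b, t), s(e, f)}) ∨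
        (labelEdges L 2 ⊆ {s(b, r), s(e, f)} ∧ labelEdges L (-1) ⊆ {s(b, s), s(b, t)})) := by
  obtain ⟨b, r, s, t, e, f, ℓ, hℓ, hrs, hrt, hbe, hbf, hD⟩ := h.exists_defectsWithin
  have htwo := hD.labelEdges_subset (.inl rfl)
  have hneg := hD.labelEdges_subset (.inr rfl)
  refine ⟨b, r, s, t, e, f, hrs, hrt, hbe, hbf, hℓ.imp ?_ ?_⟩ <;> rintro rfl
  · exact ⟨fun x hx => by simpa using htwo hx, fun x hx => by simpa using hneg hx⟩
  · exact ⟨fun x hx => by simpa using htwo hx, fun x hx => by simpa using hneg hx⟩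

lemma ValidEncoding.eq_of_two_of_two_of_neg_one (h : ValidEncoding d L) {x x' y z : Fin n}
    (hx : L y x = 2) (hx' : L y x' = 2) (hz : L y z = -1) : x = x' := by
  obtain ⟨b, r, s, t, e, f, hrs, hrt, hbe, hbf, hshape⟩ := h.exists_labelEdges_subset
  have hxe := (h.1.mk_mem_labelEdges two_ne_zero).2 hx
  have hxe' := (h.1.mk_mem_labelEdges two_ne_zero).2 hx'
  have hze := (h.1.mk_mem_labelEdges (by decide)).2 hz
  rcases hshape with ⟨htwo, -⟩ | ⟨htwo, hneg⟩
  · exact Sym2.congr_right.1 ((htwo hxe).trans (htwo hxe').symm)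
  · have hxs := htwo hxe
    have hxs' := htwo hxe'
    have hzs := hneg hze
    simp only [Set.mem_insert_iff, Set.mem_singleton_iff, Sym2.eq_iff] at hxs hxs' hzs
    grind

lemma GoodEncoding.defectLocal (h : GoodEncoding d L) : DefectLocal d L := by
  obtain ⟨hvalid, -, -, hdeg⟩ := h
  intro x x' y z hx hx' hz
  have hyx := hvalid.1.ne_of_label_ne_zero (hx.trans_ne two_ne_zero)
  have hyz := hvalid.1.ne_of_label_ne_zero (hz.trans_ne (by decide))
  have hxz : x ≠ z := by
    rintro rfl
    omega
  exact ⟨hvalid.eq_of_two_of_two_of_neg_one hx hx' hz,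
    hdeg x y z hyx.symm hyz hxz (hvalid.1.symm y x ▸ hx) hz⟩

lemma hasDefectCounts_of_mem_Lstar (h : L ∈ Lstar d Z) :
    HasDefectCounts d Z (labelEdges L 2).ncard (labelEdges L (-1)).ncard L :=
  ⟨h.1.1.1, h.2, h.1.defectLocal, rfl, rfl⟩

lemma ncard_pair_le {α : Type*} (a b : α) : ({a, b} : Set α).ncard ≤ 2 :=
  (Set.ncard_insert_le _ _).trans_eq (congrArg (· + 1) (Set.ncard_singleton b))

lemma ncard_triple_le {α : Type*} (a b c : α) : ({a, b, c} : Set α).ncard ≤ 3 :=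
  (Set.ncard_insert_le _ _).trans (Nat.succ_le_succ (ncard_pair_le b c))

lemma ValidEncoding.ncard_labelEdges_cases (h : ValidEncoding d L) :
    ((labelEdges L 2).ncard ≤ 2 ∧ (labelEdges L (-1)).ncard ≤ 2) ∨
      ((labelEdges L 2).ncard = 0 ∧ (labelEdges L (-1)).ncard = 3) ∨
      ((labelEdges L 2).ncard = 1 ∧ (labelEdges L (-1)).ncard = 3 ∧
        ∃ x y z, L x y = -1 ∧ L x z = 2) := by
  obtain ⟨b, r, s, t, e, f, -, -, -, -, ⟨htwo, hneg⟩ | ⟨htwo, hneg⟩⟩ := h.exists_labelEdges_subset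
  · have hp := (Set.ncard_le_ncard htwo).trans_eq (Set.ncard_singleton _)
    have hq := (Set.ncard_le_ncard hneg).trans (ncard_triple_le _ _ _)
    by_cases hmixed : (labelEdges L 2).ncard = 1 ∧ (labelEdges L (-1)).ncard = 3
    · have htwo := Set.eq_of_subset_of_ncard_le htwo (by simp [hmixed.1])
      have hneg := Set.eq_of_subset_of_ncard_le hneg (hmixed.2 ▸ ncard_triple_le _ _ _)
      refine .inr (.inr ⟨hmixed.1, hmixed.2, b, s, r, ?_, ?_⟩)
      · exact (h.1.mk_mem_labelEdges (by decide)).1 (hneg ▸ Set.mem_insert _ _)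
      · exact (h.1.mk_mem_labelEdges two_ne_zero).1 (htwo ▸ Set.mem_singleton _)
    · omega
  · have hp := (Set.ncard_le_ncard htwo).trans (ncard_pair_le _ _)
    have hq := (Set.ncard_le_ncard hneg).trans (ncard_pair_le _ _)
    exact .inl ⟨hp, hq⟩

lemma Lstar_subset : Lstar d Z ⊆
    ((Finset.range 3 ×ˢ Finset.range 3).biUnion fun e => defectClass d Z e.1 e.2) ∪
      (defectClass d Z 0 3 ∪ mixedClass d Z) := by
  intro L hL
  have hcounts := hasDefectCounts_of_mem_Lstar hL
  rcases hL.1.1.ncard_labelEdges_cases with ⟨hp, hq⟩ | ⟨hp, hq⟩ | ⟨hp, hq, hadj⟩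
  · refine .inl (Finset.mem_biUnion.2 ⟨((labelEdges L 2).ncard, (labelEdges L (-1)).ncard), ?_,
      mem_defectClass.2 hcounts⟩)
    simp only [Finset.mem_product, Finset.mem_range]
    omega
  · rw [hp, hq] at hcounts
    exact .inr (.inl (mem_defectClass.2 hcounts))
  · rw [hp, hq] at hcounts
    exact .inr (.inr (Finset.mem_filter.2 ⟨mem_defectClass.2 hcounts, hadj⟩))

lemma ncard_Lstar_le : (Lstar d Z).ncard ≤
    ∑ p ∈ Finset.range 3, ∑ q ∈ Finset.range 3, (defectClass d Z p q).card +
      ((defectClass d Z 0 3).card + (mixedClass d Z).card) := by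
  rw [← Finset.sum_product' (f := fun p q => (defectClass d Z p q).card)]
  calc (Lstar d Z).ncard ≤ _ := Set.ncard_le_ncard (by exact_mod_cast Lstar_subset)
    _ = _ := Set.ncard_coe_finset _
    _ ≤ _ := Finset.card_union_le _ _
    _ ≤ _ := add_le_add Finset.card_biUnion_le (Finset.card_union_le _ _)

end Classification

section Summation

variable {d : Fin n → ℕ} {Z : SimpleGraph (Fin n)} {L : Matrix (Fin n) (Fin n) ℤ} {p q D : ℕ}

namespace HasDefectCounts

lemma label_eq_zero_or_one (hL : HasDefectCounts d Z 0 0 L) (i j : Fin n) :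
    L i j = 0 ∨ L i j = 1 := by
  have hlabel : ∀ c ≠ 0, (labelEdges L c).ncard = 0 → L i j ≠ c := fun c hc hcard hij =>
    ((Set.ncard_eq_zero (Set.toFinite _)).1 hcard).le
      ((hL.isEncoding.mk_mem_labelEdges hc).2 hij)
  have := hlabel 2 two_ne_zero hL.ncard_two
  have := hlabel (-1) (by decide) hL.ncard_neg_one
  have := hL.isEncoding.label i j
  tauto

lemma eq_adjMat (hL : HasDefectCounts d Z 0 0 L) : L = adjMat (labelGraph L 1) := by
  ext i j
  rcases hL.label_eq_zero_or_one i j with h | h <;>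
    simp [adjMat, hL.isEncoding.labelGraph_adj one_ne_zero, h]

lemma labelGraph_mem_Omega (hL : HasDefectCounts d Z 0 0 L) : labelGraph L 1 ∈ Omega d := by
  intro v
  have hnbrs : ∀ c, c ≠ 0 → c ≠ 1 → labelNbrs L c v = ∅ := fun c h0 h1 => by
    refine Finset.eq_empty_of_forall_notMem fun w hw => ?_
    rcases hL.label_eq_zero_or_one v w with h | h <;> simp_all
  have hdeg := hL.isEncoding.card_labelNbrs_one v
  rw [hnbrs 2 (by decide) (by decide), hnbrs (-1) (by decide) (by decide)] at hdeg
  simp only [Finset.card_empty, mul_zero, add_zero] at hdeg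
  rw [← hdeg, ← Set.ncard_coe_finset]
  congr 1
  ext w
  simp [hL.isEncoding.labelGraph_adj one_ne_zero]

end HasDefectCounts

lemma card_defectClass_zero_le (d : Fin n → ℕ) (Z : SimpleGraph (Fin n)) :
    (defectClass d Z 0 0).card ≤ (Omega d).ncard := by
  rw [← Set.ncard_coe_finset]
  refine Set.ncard_le_ncard_of_injOn (fun L => labelGraph L 1)
    (fun L hL => (mem_defectClass.1 hL).labelGraph_mem_Omega) (fun L hL L' hL' h => ?_)
    (Set.toFinite _)
  rw [(mem_defectClass.1 hL).eq_adjMat, (mem_defectClass.1 hL').eq_adjMat]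
  exact congrArg adjMat h

lemma mul_two_mul_le_pow_mul {m S x y c j k : ℕ} (hy : 2 * y ≤ m ^ j * x)
    (hx : c * x ≤ m ^ k * S) : c * 2 * y ≤ m ^ (k + j) * S := by
  calc c * 2 * y = c * (2 * y) := mul_assoc c 2 y
    _ ≤ c * (m ^ j * x) := by gcongr
    _ = m ^ j * (c * x) := mul_left_comm _ _ _
    _ ≤ m ^ j * (m ^ k * S) := by gcongr
    _ = m ^ (k + j) * S := by rw [pow_add]; ring

lemma two_pow_mul_card_defectClass_zero_le (hd : ∀ v, d v ≤ D) (hD : 3 ≤ D)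
    (hM : 9 * D ^ 2 ≤ M d) (hp : p ≤ 2) :
    2 ^ p * (defectClass d Z p 0).card ≤ M d ^ p * (Omega d).ncard := by
  induction p with
  | zero => simpa using card_defectClass_zero_le d Z
  | succ p ih =>
    exact mul_two_mul_le_pow_mul (j := 1)
      (by simpa using two_mul_card_defectClass_succ_zero_le hd hD hM (by omega)) (ih (by omega))

lemma two_pow_mul_card_defectClass_le (hZ : Z ∈ Omega d) (hd : ∀ v, d v ≤ D) (hD : 3 ≤ D)
    (hM : 9 * D ^ 2 ≤ M d) (hp : p ≤ 2) (hq : q ≤ 3) (hpq : p + q ≤ 4) :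
    2 ^ (p + q) * (defectClass d Z p q).card ≤ M d ^ (p + 2 * q) * (Omega d).ncard := by
  induction q with
  | zero => exact two_pow_mul_card_defectClass_zero_le hd hD hM hp
  | succ q ih =>
    exact mul_two_mul_le_pow_mul (c := 2 ^ (p + q)) (k := p + 2 * q) (j := 2)
      (two_mul_card_defectClass_succ_le hZ hd hD hM hp (by omega) (by omega))
      (ih (by omega) (by omega))

lemma eight_mul_card_mixedClass_le (hZ : Z ∈ Omega d) (hd : ∀ v, d v ≤ D) (hD : 3 ≤ D)
    (hM : 9 * D ^ 2 ≤ M d) :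
    8 * (mixedClass d Z).card ≤ M d ^ 6 * (3 * (Omega d).ncard) := by
  have htwo : 4 * (defectClass d Z 0 2).card ≤ M d ^ 4 * (Omega d).ncard :=
    two_pow_mul_card_defectClass_le hZ hd hD hM (p := 0) (q := 2) zero_le_two (by decide)
      (by decide)
  have hmixed := two_mul_card_mixedClass_le hZ hd hD hM
  exact mul_two_mul_le_pow_mul (c := 4) (k := 4) (j := 2)
    (x := 3 * (defectClass d Z 0 2).card) (by linarith) (by linarith)

lemma eightyone_mul_card_defectClass_le (hZ : Z ∈ Omega d) (hd : ∀ v, d v ≤ D) (hD : 3 ≤ D)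
    (hM : 9 * D ^ 2 ≤ M d) (hp : p ≤ 2) (hpq : p + 2 * q < 6) :
    81 * (defectClass d Z p q).card ≤ M d ^ 6 * (Omega d).ncard := by
  have h81 : 81 ≤ M d := by nlinarith
  calc 81 * (defectClass d Z p q).card
      ≤ M d * (2 ^ (p + q) * (defectClass d Z p q).card) :=
        Nat.mul_le_mul h81 (Nat.le_mul_of_pos_left _ (by positivity))
    _ ≤ M d * (M d ^ (p + 2 * q) * (Omega d).ncard) :=
        Nat.mul_le_mul_left _ (two_pow_mul_card_defectClass_le hZ hd hD hM hp (by omega) (by omega))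
    _ = M d ^ (p + 2 * q + 1) * (Omega d).ncard := by ring
    _ ≤ M d ^ 6 * (Omega d).ncard := by
        gcongr <;> omega

end Summation

lemma le_dmax (d : Fin n → ℕ) (v : Fin n) : d v ≤ dmax d :=
  Finset.le_sup (Finset.mem_univ v)

lemma nine_mul_sq_le_of_le_third_mul_sqrt {D m : ℕ} (h : (D : ℝ) ≤ (1 / 3) * √m) :
    9 * D ^ 2 ≤ m := by
  have hsqrt : 3 * (D : ℝ) ≤ √m := by linarith
  have hsq := (Real.le_sqrt (by positivity) (by positivity)).1 hsqrt
  have : (9 * D ^ 2 : ℝ) ≤ m := by linarith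
  exact_mod_cast this

theorem Lstar_card_le_general {d : Fin n → ℕ} {Z : SimpleGraph (Fin n)} {D : ℕ}
    (hZ : Z ∈ Omega d) (hd : ∀ v, d v ≤ D) (hD : 3 ≤ D) (hM : 9 * D ^ 2 ≤ M d) :
    (Lstar d Z).ncard ≤ M d ^ 6 * (Omega d).ncard := by
  have hlow : ∀ p q, p ≤ 2 → p + 2 * q < 6 →
      81 * (defectClass d Z p q).card ≤ M d ^ 6 * (Omega d).ncard := fun p q =>
    eightyone_mul_card_defectClass_le hZ hd hD hM
  have h00 := hlow 0 0 (by decide) (by decide)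
  have h01 := hlow 0 1 (by decide) (by decide)
  have h02 := hlow 0 2 (by decide) (by decide)
  have h10 := hlow 1 0 (by decide) (by decide)
  have h11 := hlow 1 1 (by decide) (by decide)
  have h12 := hlow 1 2 (by decide) (by decide)
  have h20 := hlow 2 0 (by decide) (by decide)
  have h21 := hlow 2 1 (by decide) (by decide)
  have h22 : 16 * (defectClass d Z 2 2).card ≤ M d ^ 6 * (Omega d).ncard :=
    two_pow_mul_card_defectClass_le hZ hd hD hM (p := 2) (q := 2) le_rfl (by decide) le_rfl
  have h03 : 8 * (defectClass d Z 0 3).card ≤ M d ^ 6 * (Omega d).ncard :=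
    two_pow_mul_card_defectClass_le hZ hd hD hM (p := 0) (q := 3) (by decide) le_rfl (by decide)
  have hmixed := eight_mul_card_mixedClass_le hZ hd hD hM
  have hunion := ncard_Lstar_le (d := d) (Z := Z)
  simp only [Finset.sum_range_succ, Finset.sum_range_zero, zero_add] at hunion
  rw [mul_left_comm] at hmixed
  omega

/-- The critical lemma: `|L*(Z)| ≤ 2 M⁶ |Ω(d)|`. -/
theorem Lstar_card_le
    (d : Fin n → ℕ) (hgraphical : (Omega d).Nonempty)
    (hdmin : ∀ v, 1 ≤ d v)
    (hdmax3 : 3 ≤ dmax d)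
    (hdmaxM : (dmax d : ℝ) ≤ (1 / 3) * Real.sqrt (M d))
    (Z : SimpleGraph (Fin n)) (hZ : Z ∈ Omega d) :
    (Lstar d Z).ncard ≤ 2 * M d ^ 6 * (Omega d).ncard := by
  have hM := nine_mul_sq_le_of_le_third_mul_sqrt hdmaxM
  rw [mul_assoc]
  exact (Lstar_card_le_general hZ (le_dmax d) hdmax3 hM).trans
    (Nat.le_mul_of_pos_left _ two_pos)

end SwitchChain
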